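/- In the algebra SLF(Ū_q) with convolution product, there exist complex scalars γ_s, β_s, λ_s (for the indicated ranges of s) and η_s, δ_s such that: χ^+_2 G_s = β_s G_{s−1} + γ_s G_{s+1} + λ_s (χ^+_{s−1} + χ^−_{p−s+1} − χ^+_{s+1} − χ^−_{p−s−1}) for 2 ≤ s ≤ p−2; χ^+_2 G_1 = γ_1 G_2 + λ_1 (χ^−_p − χ^+_2 − χ^−_{p−2}); χ^+_2 G_{p−1} = β_{p−1} G_{p−2} + λ_{p−1} (χ^+_{p−2} + χ^−_2 − χ^+_p); and χ^−_1 G_s = η_s G_{p−s} + δ_s (χ^+_{p−s} + χ^−_s) for 1 ≤ s ≤ p−1. -/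

import Mathlib

noncomputable section

open scoped TensorProduct

namespace Uqsl2

/-- Generators of the restricted quantum group. -/
inductive gen : Type | E | F | K | Kinv

/-- The primitive `2p`-th root of unity `q = e^{iπ/p}`. -/
def q (p : ℕ) : ℂ := Complex.exp (Real.pi * Complex.I / p)

/-- The `q`-integer `[n] = (q^n - q^{-n})/(q - q^{-1})`. -/
def qi (p : ℕ) (n : ℤ) : ℂ := (q p ^ n - q p ^ (-n)) / (q p - (q p)⁻¹)

/-- The `q`-factorial `[m]!`. -/
def qfact (p m : ℕ) : ℂ := ∏ i ∈ Finset.range m, qi p (i + 1)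

open FreeAlgebra in
/-- The defining relations of `Ū_q(sl₂)`. -/
inductive rel (p : ℕ) : FreeAlgebra ℂ gen → FreeAlgebra ℂ gen → Prop
  | KKinv : rel p (ι ℂ gen.K * ι ℂ gen.Kinv) 1
  | KinvK : rel p (ι ℂ gen.Kinv * ι ℂ gen.K) 1
  | Ep : rel p (ι ℂ gen.E ^ p) 0
  | Fp : rel p (ι ℂ gen.F ^ p) 0
  | K2p : rel p (ι ℂ gen.K ^ (2 * p)) 1
  | KE : rel p (ι ℂ gen.K * ι ℂ gen.E) (q p ^ 2 • (ι ℂ gen.E * ι ℂ gen.K))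
  | KF : rel p (ι ℂ gen.K * ι ℂ gen.F) ((q p ^ 2)⁻¹ • (ι ℂ gen.F * ι ℂ gen.K))
  | EF : rel p (ι ℂ gen.E * ι ℂ gen.F - ι ℂ gen.F * ι ℂ gen.E)
             ((q p - (q p)⁻¹)⁻¹ • (ι ℂ gen.K - ι ℂ gen.Kinv))

/-- The restricted quantum group `Ū_q(sl₂)`, presented by generators and relations. -/
abbrev Uq (p : ℕ) := RingQuot (rel p)

def EE (p : ℕ) : Uq p := RingQuot.mkAlgHom ℂ (rel p) (FreeAlgebra.ι ℂ gen.E)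
def FF (p : ℕ) : Uq p := RingQuot.mkAlgHom ℂ (rel p) (FreeAlgebra.ι ℂ gen.F)
def KK (p : ℕ) : Uq p := RingQuot.mkAlgHom ℂ (rel p) (FreeAlgebra.ι ℂ gen.K)
def KKinv (p : ℕ) : Uq p := RingQuot.mkAlgHom ℂ (rel p) (FreeAlgebra.ι ℂ gen.Kinv)

/-! ### The simple modules `X^α(s)` as matrix representations -/

/-- Matrix of `K` on `X^α(s)` in the canonical basis. -/
def XK (p : ℕ) (α : ℂ) (s : ℕ) : Matrix (Fin s) (Fin s) ℂ :=
  Matrix.diagonal fun i => α * q p ^ ((s : ℤ) - 1 - 2 * (i : ℕ))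

/-- Matrix of `E` on `X^α(s)` in the canonical basis. -/
def XE (p : ℕ) (α : ℂ) (s : ℕ) : Matrix (Fin s) (Fin s) ℂ :=
  Matrix.of fun i j =>
    if (i : ℕ) + 1 = (j : ℕ) then α * qi p (j : ℕ) * qi p ((s : ℤ) - (j : ℕ)) else 0

/-- Matrix of `F` on `X^α(s)` in the canonical basis. -/
def XF (s : ℕ) : Matrix (Fin s) (Fin s) ℂ :=
  Matrix.of fun i j => if (i : ℕ) = (j : ℕ) + 1 then (1 : ℂ) else 0

/-- The statement that `ρX α s` is the representation on `X^α(s)` for the relevant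
values of `α` and `s`. -/
def IsXRep (p : ℕ) (ρX : (α : ℂ) → (s : ℕ) → (Uq p →ₐ[ℂ] Matrix (Fin s) (Fin s) ℂ)) : Prop :=
  ∀ α : ℂ, (α = 1 ∨ α = -1) → ∀ s : ℕ, 1 ≤ s → s ≤ p →
    ρX α s (KK p) = XK p α s ∧ ρX α s (EE p) = XE p α s ∧ ρX α s (FF p) = XF s

/-! ### The projective modules `P^α(s)` as matrix representations -/

/-- Index for the standard basis `(b_i, x_j, y_k, a_l)` of `P^α(s)`. -/
abbrev PIdx (p s : ℕ) := Fin s ⊕ (Fin (p - s) ⊕ (Fin (p - s) ⊕ Fin s))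

/-- Diagonal of the matrix of `K` on `P^α(s)`. -/
def PKdiag (p : ℕ) (α : ℂ) (s : ℕ) : PIdx p s → ℂ
  | .inl i => α * q p ^ ((s : ℤ) - 1 - 2 * (i : ℕ))
  | .inr (.inl j) => -α * q p ^ ((p : ℤ) - s - 1 - 2 * (j : ℕ))
  | .inr (.inr (.inl k)) => -α * q p ^ ((p : ℤ) - s - 1 - 2 * (k : ℕ))
  | .inr (.inr (.inr l)) => α * q p ^ ((s : ℤ) - 1 - 2 * (l : ℕ))

/-- Matrix of `K` on `P^α(s)` in the standard basis. -/
def PK (p : ℕ) (α : ℂ) (s : ℕ) : Matrix (PIdx p s) (PIdx p s) ℂ :=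
  Matrix.diagonal (PKdiag p α s)

/-- Matrix of `E` on `P^α(s)` in the standard basis. -/
def PE (p : ℕ) (α : ℂ) (s : ℕ) : Matrix (PIdx p s) (PIdx p s) ℂ :=
  Matrix.of fun i j =>
    match i, j with
    | .inl i, .inl j =>
        if (i : ℕ) + 1 = (j : ℕ) then α * qi p (j : ℕ) * qi p ((s : ℤ) - (j : ℕ)) else 0
    | .inr (.inl jx), .inl j => if (j : ℕ) = 0 ∧ (jx : ℕ) + 1 = p - s then 1 else 0
    | .inr (.inr (.inr l)), .inl j => if (l : ℕ) + 1 = (j : ℕ) then 1 else 0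
    | .inr (.inl i), .inr (.inl j) =>
        if (i : ℕ) + 1 = (j : ℕ) then -α * qi p (j : ℕ) * qi p ((p : ℤ) - s - (j : ℕ)) else 0
    | .inr (.inr (.inl i)), .inr (.inr (.inl k)) =>
        if (i : ℕ) + 1 = (k : ℕ) then -α * qi p (k : ℕ) * qi p ((p : ℤ) - s - (k : ℕ)) else 0
    | .inr (.inr (.inr l)), .inr (.inr (.inl k)) =>
        if (k : ℕ) = 0 ∧ (l : ℕ) + 1 = s then 1 else 0
    | .inr (.inr (.inr i)), .inr (.inr (.inr l)) =>
        if (i : ℕ) + 1 = (l : ℕ) then α * qi p (l : ℕ) * qi p ((s : ℤ) - (l : ℕ)) else 0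
    | _, _ => 0

/-- Matrix of `F` on `P^α(s)` in the standard basis. -/
def PF (p s : ℕ) : Matrix (PIdx p s) (PIdx p s) ℂ :=
  Matrix.of fun i j =>
    match i, j with
    | .inl i, .inl j => if (i : ℕ) = (j : ℕ) + 1 then (1 : ℂ) else 0
    | .inr (.inr (.inl k)), .inl j => if (j : ℕ) + 1 = s ∧ (k : ℕ) = 0 then 1 else 0
    | .inr (.inl i), .inr (.inl j) => if (i : ℕ) = (j : ℕ) + 1 then 1 else 0
    | .inr (.inr (.inr l)), .inr (.inl j) => if (j : ℕ) + 1 = p - s ∧ (l : ℕ) = 0 then 1 else 0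
    | .inr (.inr (.inl i)), .inr (.inr (.inl k)) => if (i : ℕ) = (k : ℕ) + 1 then 1 else 0
    | .inr (.inr (.inr i)), .inr (.inr (.inr l)) => if (i : ℕ) = (l : ℕ) + 1 then 1 else 0
    | _, _ => 0

/-- The statement that `ρP α s` is the representation on `P^α(s)` for the relevant
values of `α` and `s`. -/
def IsPRep (p : ℕ)
    (ρP : (α : ℂ) → (s : ℕ) → (Uq p →ₐ[ℂ] Matrix (PIdx p s) (PIdx p s) ℂ)) : Prop :=
  ∀ α : ℂ, (α = 1 ∨ α = -1) → ∀ s : ℕ, 1 ≤ s → s ≤ p - 1 →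
    ρP α s (KK p) = PK p α s ∧ ρP α s (EE p) = PE p α s ∧ ρP α s (FF p) = PF p s

/-! ### Symmetric linear forms, characters, and the forms `G_s` -/

/-- Symmetric linear forms. -/
def IsSLF (p : ℕ) (φ : Uq p →ₗ[ℂ] ℂ) : Prop := ∀ x y : Uq p, φ (x * y) = φ (y * x)

/-- The character of a matrix representation. -/
def chiOf (p : ℕ) {n : Type} [Fintype n] [DecidableEq n]
    (ρ : Uq p →ₐ[ℂ] Matrix n n ℂ) : Uq p →ₗ[ℂ] ℂ :=
  (Matrix.traceLinearMap n ℂ ℂ).comp ρ.toLinearMap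

/-- The matrix entry functional. -/
def entry {n : Type} (i j : n) : Matrix n n ℂ →ₗ[ℂ] ℂ where
  toFun M := M i j
  map_add' _ _ := rfl
  map_smul' _ _ := rfl

/-- The symmetric linear form `G_s = tr H^+_s + tr H^-_{p-s}`. -/
def GOf (p : ℕ)
    (ρP : (α : ℂ) → (s : ℕ) → (Uq p →ₐ[ℂ] Matrix (PIdx p s) (PIdx p s) ℂ))
    (s : ℕ) : Uq p →ₗ[ℂ] ℂ :=
  (∑ i : Fin s,
    (entry (Sum.inr (Sum.inr (Sum.inr i))) (Sum.inl i)).comp (ρP 1 s).toLinearMap) +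
  (∑ j : Fin (p - s),
    (entry (Sum.inr (Sum.inr (Sum.inr j))) (Sum.inl j)).comp (ρP (-1) (p - s)).toLinearMap)

/-! ### Convolution product -/

/-- The convolution product of two linear forms, with respect to a comultiplication `Δ`. -/
def conv (p : ℕ) (Δ : Uq p →ₐ[ℂ] (Uq p ⊗[ℂ] Uq p)) (φ ψ : Uq p →ₗ[ℂ] ℂ) :
    Uq p →ₗ[ℂ] ℂ :=
  (LinearMap.mul' ℂ ℂ).comp ((TensorProduct.map φ ψ).comp Δ.toLinearMap)

/-- The statement that `Δ` is the comultiplication of `Ū_q(sl₂)`. -/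
def IsCoprod (p : ℕ) (Δ : Uq p →ₐ[ℂ] (Uq p ⊗[ℂ] Uq p)) : Prop :=
  Δ (EE p) = 1 ⊗ₜ[ℂ] EE p + EE p ⊗ₜ[ℂ] KK p ∧
  Δ (FF p) = FF p ⊗ₜ[ℂ] 1 + KKinv p ⊗ₜ[ℂ] FF p ∧
  Δ (KK p) = KK p ⊗ₜ[ℂ] KK p ∧
  Δ (KKinv p) = KKinv p ⊗ₜ[ℂ] KKinv p


section basics

variable {p : ℕ}

lemma q_prim (hp : 2 ≤ p) : IsPrimitiveRoot (q p) (2 * p) := by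
  have h := Complex.isPrimitiveRoot_exp (2 * p) (by omega)
  have hp0 : (p : ℂ) ≠ 0 := by
    have : p ≠ 0 := by omega
    exact_mod_cast this
  convert h using 1
  unfold q
  congr 1
  push_cast
  field_simp

lemma q_ne (p : ℕ) : q p ≠ 0 := Complex.exp_ne_zero _

lemma q_pow_ne (hp : 2 ≤ p) {m : ℕ} (h0 : 0 < m) (hm : m < p) : q p ^ (2 * m) ≠ 1 := by
  intro h
  have := (q_prim hp).dvd_of_pow_eq_one _ h
  have := Nat.le_of_dvd (by omega) this
  omega

lemma q_pow_p (hp : 2 ≤ p) : q p ^ p = -1 := by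
  have h := (q_prim hp).pow_eq_one
  have h2 : (q p ^ p - 1) * (q p ^ p + 1) = 0 := by
    rw [mul_comm 2 p, pow_mul] at h
    linear_combination h
  rcases mul_eq_zero.1 h2 with h3 | h3
  · exfalso
    have := (q_prim hp).dvd_of_pow_eq_one p (by linear_combination h3)
    have := Nat.le_of_dvd (by omega) this
    omega
  · linear_combination h3

lemma d_ne (hp : 2 ≤ p) : q p - (q p)⁻¹ ≠ 0 := by
  intro h
  have hq := q_ne p
  apply q_pow_ne hp (m := 1) (by omega) (by omega)
  field_simp at h
  linear_combination h

lemma rel_KKinv : KK p * KKinv p = 1 := by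
  have := RingQuot.mkAlgHom_rel ℂ (rel.KKinv (p := p))
  simpa [KK, KKinv] using this

lemma rel_KinvK : KKinv p * KK p = 1 := by
  have := RingQuot.mkAlgHom_rel ℂ (rel.KinvK (p := p))
  simpa [KK, KKinv] using this

lemma rel_Ep : EE p ^ p = 0 := by
  have := RingQuot.mkAlgHom_rel ℂ (rel.Ep (p := p))
  simpa [EE] using this

lemma rel_Fp : FF p ^ p = 0 := by
  have := RingQuot.mkAlgHom_rel ℂ (rel.Fp (p := p))
  simpa [FF] using this

lemma rel_K2p : KK p ^ (2 * p) = 1 := by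
  have := RingQuot.mkAlgHom_rel ℂ (rel.K2p (p := p))
  simpa [KK] using this

lemma rel_KE : KK p * EE p = q p ^ 2 • (EE p * KK p) := by
  have := RingQuot.mkAlgHom_rel ℂ (rel.KE (p := p))
  simpa [KK, EE] using this

lemma rel_KF : KK p * FF p = (q p ^ 2)⁻¹ • (FF p * KK p) := by
  have := RingQuot.mkAlgHom_rel ℂ (rel.KF (p := p))
  simpa [KK, FF] using this

lemma rel_EF : EE p * FF p = FF p * EE p + (q p - (q p)⁻¹)⁻¹ • (KK p - KKinv p) := by
  have := RingQuot.mkAlgHom_rel ℂ (rel.EF (p := p))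
  rw [← sub_eq_iff_eq_add']
  simpa [KK, KKinv, EE, FF] using this

lemma EK : EE p * KK p = (q p ^ 2)⁻¹ • (KK p * EE p) := by
  rw [rel_KE, smul_smul, inv_mul_cancel₀ (pow_ne_zero _ (q_ne p)), one_smul]

lemma FK : FF p * KK p = q p ^ 2 • (KK p * FF p) := by
  rw [rel_KF, smul_smul, mul_inv_cancel₀ (pow_ne_zero _ (q_ne p)), one_smul]

lemma EKinv : EE p * KKinv p = q p ^ 2 • (KKinv p * EE p) := by
  calc EE p * KKinv p = KKinv p * (KK p * EE p) * KKinv p := by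
        rw [← mul_assoc, rel_KinvK, one_mul]
    _ = q p ^ 2 • (KKinv p * EE p * (KK p * KKinv p)) := by
        rw [rel_KE]; simp [mul_assoc]
    _ = _ := by rw [rel_KKinv, mul_one]

lemma FKinv : FF p * KKinv p = (q p ^ 2)⁻¹ • (KKinv p * FF p) := by
  calc FF p * KKinv p = KKinv p * (KK p * FF p) * KKinv p := by
        rw [← mul_assoc, rel_KinvK, one_mul]
    _ = (q p ^ 2)⁻¹ • (KKinv p * FF p * (KK p * KKinv p)) := by
        rw [rel_KF]; simp [mul_assoc]
    _ = _ := by rw [rel_KKinv, mul_one]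

/-- The Casimir element. -/
def CC (p : ℕ) : Uq p :=
  FF p * EE p + ((q p - (q p)⁻¹) ^ 2)⁻¹ • (q p • KK p + (q p)⁻¹ • KKinv p)

lemma FE_eq : FF p * EE p =
    CC p - ((q p - (q p)⁻¹) ^ 2)⁻¹ • (q p • KK p + (q p)⁻¹ • KKinv p) := by
  simp [CC]

lemma EF_eq (hp : 2 ≤ p) : EE p * FF p =
    CC p - ((q p - (q p)⁻¹) ^ 2)⁻¹ • ((q p)⁻¹ • KK p + q p • KKinv p) := by
  have hd := d_ne hp
  have hq := q_ne p
  rw [rel_EF, FE_eq]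
  generalize hd' : q p - (q p)⁻¹ = d at *
  match_scalars <;> field_simp <;> rw [← hd'] <;> field_simp <;> ring

lemma K_C : KK p * CC p = CC p * KK p := by
  have h1 : KK p * (FF p * EE p) = FF p * EE p * KK p := by
    rw [mul_assoc, EK, mul_smul_comm, ← mul_assoc (FF p), FK, ← mul_assoc, smul_mul_assoc,
      smul_smul, inv_mul_cancel₀ (pow_ne_zero _ (q_ne p)), one_smul]
  simp only [CC, mul_add, add_mul, h1, mul_smul_comm, smul_mul_assoc, rel_KKinv, rel_KinvK]

lemma E_C (hp : 2 ≤ p) : EE p * CC p = CC p * EE p := by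
  have hd := d_ne hp
  have hq := q_ne p
  have h1 : EE p * (FF p * EE p) = FF p * (EE p * EE p) + 
      (q p - (q p)⁻¹)⁻¹ • (KK p * EE p - KKinv p * EE p) := by
    rw [← mul_assoc, rel_EF, add_mul, smul_mul_assoc, sub_mul, mul_assoc]
  simp only [CC, mul_add, add_mul, h1, mul_smul_comm, smul_mul_assoc, EK, EKinv, mul_assoc]
  generalize hd' : q p - (q p)⁻¹ = d at *
  match_scalars <;> field_simp <;> rw [← hd'] <;> field_simp <;> ring

lemma F_C (hp : 2 ≤ p) : FF p * CC p = CC p * FF p := by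
  have hd := d_ne hp
  have hq := q_ne p
  have h1 : FF p * (EE p * FF p) = FF p * (FF p * EE p) + 
      (q p - (q p)⁻¹)⁻¹ • (FF p * KK p - FF p * KKinv p) := by
    rw [rel_EF, mul_add, mul_smul_comm, mul_sub]
  simp only [CC, mul_add, add_mul, h1, mul_smul_comm, smul_mul_assoc, FK, FKinv, mul_assoc]
  generalize hd' : q p - (q p)⁻¹ = d at *
  match_scalars <;> field_simp <;> rw [← hd'] <;> field_simp <;> ring

lemma Kinv_eq (hp : 2 ≤ p) : KKinv p = KK p ^ (2 * p - 1) := by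
  have h : KK p ^ (2 * p - 1) * KK p = 1 := by
    rw [← pow_succ, show 2 * p - 1 + 1 = 2 * p by omega, rel_K2p]
  calc KKinv p = (KK p ^ (2 * p - 1) * KK p) * KKinv p := by rw [h, one_mul]
    _ = _ := by rw [mul_assoc, rel_KKinv, mul_one]

end basics

section spanning

variable {p : ℕ}

lemma K_E_pow (a : ℕ) : KK p * EE p ^ a = (q p ^ (2 * a)) • (EE p ^ a * KK p) := by
  induction a with
  | zero => simp
  | succ n ih =>
    rw [pow_succ, ← mul_assoc, ih, smul_mul_assoc, mul_assoc, rel_KE, mul_smul_comm, smul_smul,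
      mul_assoc]
    congr 1
    ring

lemma K_F_pow (a : ℕ) : KK p * FF p ^ a = (q p ^ (2 * a))⁻¹ • (FF p ^ a * KK p) := by
  induction a with
  | zero => simp
  | succ n ih =>
    rw [pow_succ, ← mul_assoc, ih, smul_mul_assoc, mul_assoc, rel_KF, mul_smul_comm, smul_smul,
      mul_assoc, ← mul_inv]
    congr 2
    ring

lemma E_K_pow (c : ℕ) : EE p * KK p ^ c = (((q p ^ 2)⁻¹) ^ c) • (KK p ^ c * EE p) := by
  induction c with
  | zero => simp
  | succ n ih =>
    rw [pow_succ, ← mul_assoc, ih, smul_mul_assoc, mul_assoc, EK, mul_smul_comm, smul_smul,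
      mul_assoc, ← pow_succ]

lemma F_K_pow (c : ℕ) : FF p * KK p ^ c = ((q p ^ 2) ^ c) • (KK p ^ c * FF p) := by
  induction c with
  | zero => simp
  | succ n ih =>
    rw [pow_succ, ← mul_assoc, ih, smul_mul_assoc, mul_assoc, FK, mul_smul_comm, smul_smul,
      mul_assoc, ← pow_succ]

/-- The spanning family of monomials. -/
def spanSet (p : ℕ) : Set (Uq p) :=
  {x | ∃ c n a : ℕ, x = KK p ^ c * CC p ^ n * EE p ^ a} ∪
  {x | ∃ c n a : ℕ, x = KK p ^ c * CC p ^ n * FF p ^ a}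

lemma mem_E (c n a : ℕ) :
    KK p ^ c * CC p ^ n * EE p ^ a ∈ Submodule.span ℂ (spanSet p) :=
  Submodule.subset_span (Or.inl ⟨c, n, a, rfl⟩)

lemma mem_F (c n a : ℕ) :
    KK p ^ c * CC p ^ n * FF p ^ a ∈ Submodule.span ℂ (spanSet p) :=
  Submodule.subset_span (Or.inr ⟨c, n, a, rfl⟩)

lemma K_mem {x : Uq p} (hx : x ∈ Submodule.span ℂ (spanSet p)) :
    KK p * x ∈ Submodule.span ℂ (spanSet p) := by
  induction hx using Submodule.span_induction with
  | mem x h =>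
    rcases h with ⟨c, n, a, rfl⟩ | ⟨c, n, a, rfl⟩
    · rw [← mul_assoc, ← mul_assoc, ← pow_succ']
      exact mem_E _ _ _
    · rw [← mul_assoc, ← mul_assoc, ← pow_succ']
      exact mem_F _ _ _
  | zero => simp
  | add x y _ _ h1 h2 => rw [mul_add]; exact add_mem h1 h2
  | smul r x _ h => rw [mul_smul_comm]; exact Submodule.smul_mem _ _ h

lemma Kpow_mem (m : ℕ) {x : Uq p} (hx : x ∈ Submodule.span ℂ (spanSet p)) :
    KK p ^ m * x ∈ Submodule.span ℂ (spanSet p) := by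
  induction m with
  | zero => simpa
  | succ n ih => rw [pow_succ', mul_assoc]; exact K_mem ih

lemma E_mem (hp : 2 ≤ p) {x : Uq p} (hx : x ∈ Submodule.span ℂ (spanSet p)) :
    EE p * x ∈ Submodule.span ℂ (spanSet p) := by
  have hC : ∀ n, EE p * CC p ^ n = CC p ^ n * EE p :=
    fun n => ((show Commute (EE p) (CC p) from E_C hp).pow_right n)
  induction hx using Submodule.span_induction with
  | mem x h =>
    rcases h with ⟨c, n, a, rfl⟩ | ⟨c, n, a, rfl⟩
    · have : EE p * (KK p ^ c * CC p ^ n * EE p ^ a) =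
          (((q p ^ 2)⁻¹) ^ c) • (KK p ^ c * CC p ^ n * EE p ^ (a + 1)) := by
        rw [← mul_assoc, ← mul_assoc, E_K_pow, smul_mul_assoc, smul_mul_assoc, mul_assoc _ (EE p),
          hC, pow_succ' (EE p)]
        simp only [mul_assoc]
      rw [this]
      exact Submodule.smul_mem _ _ (mem_E _ _ _)
    · cases a with
      | zero =>
        have : EE p * (KK p ^ c * CC p ^ n * FF p ^ 0) =
          (((q p ^ 2)⁻¹) ^ c) • (KK p ^ c * CC p ^ n * EE p ^ 1) := by
          rw [← mul_assoc, ← mul_assoc, E_K_pow, smul_mul_assoc, smul_mul_assoc,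
            mul_assoc _ (EE p), hC]
          simp only [mul_assoc, pow_zero, mul_one, pow_one]
        rw [this]
        exact Submodule.smul_mem _ _ (mem_E _ _ _)
      | succ a =>
        have : EE p * (KK p ^ c * CC p ^ n * FF p ^ (a + 1)) =
          (((q p ^ 2)⁻¹) ^ c) • (KK p ^ c * CC p ^ n * ((EE p * FF p) * FF p ^ a)) := by
          rw [← mul_assoc, ← mul_assoc, E_K_pow, smul_mul_assoc, smul_mul_assoc,
            mul_assoc _ (EE p), hC, pow_succ' (FF p)]
          simp only [mul_assoc]
        rw [this, EF_eq hp]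
        apply Submodule.smul_mem
        have hK : ∀ m, KK p ^ c * CC p ^ n * (KK p ^ m * FF p ^ a) =
            KK p ^ (m + c) * CC p ^ n * FF p ^ a := by
          intro m
          have : KK p ^ m * CC p ^ n = CC p ^ n * KK p ^ m :=
            (show Commute (KK p) (CC p) from K_C).pow_pow m n
          rw [← mul_assoc, mul_assoc (KK p ^ c), ← this, ← mul_assoc, ← pow_add, add_comm c]
        have h2 := hK 1
        rw [pow_one] at h2
        rw [Kinv_eq hp]
        simp only [sub_mul, add_mul, smul_mul_assoc, mul_sub, mul_add, mul_smul_comm, hK, h2]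
        refine sub_mem ?_ (Submodule.smul_mem _ _ (add_mem (Submodule.smul_mem _ _ (mem_F _ _ _))
          (Submodule.smul_mem _ _ (mem_F _ _ _))))
        rw [← mul_assoc, mul_assoc (KK p ^ c), ← pow_succ]
        exact mem_F _ _ _
  | zero => simp
  | add x y _ _ h1 h2 => rw [mul_add]; exact add_mem h1 h2
  | smul r x _ h => rw [mul_smul_comm]; exact Submodule.smul_mem _ _ h

lemma F_mem (hp : 2 ≤ p) {x : Uq p} (hx : x ∈ Submodule.span ℂ (spanSet p)) :
    FF p * x ∈ Submodule.span ℂ (spanSet p) := by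
  have hC : ∀ n, FF p * CC p ^ n = CC p ^ n * FF p :=
    fun n => ((show Commute (FF p) (CC p) from F_C hp).pow_right n)
  induction hx using Submodule.span_induction with
  | mem x h =>
    rcases h with ⟨c, n, a, rfl⟩ | ⟨c, n, a, rfl⟩
    · cases a with
      | zero =>
        have : FF p * (KK p ^ c * CC p ^ n * EE p ^ 0) =
          ((q p ^ 2) ^ c) • (KK p ^ c * CC p ^ n * FF p ^ 1) := by
          rw [← mul_assoc, ← mul_assoc, F_K_pow, smul_mul_assoc, smul_mul_assoc,
            mul_assoc _ (FF p), hC]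
          simp only [mul_assoc, pow_zero, mul_one, pow_one]
        rw [this]
        exact Submodule.smul_mem _ _ (mem_F _ _ _)
      | succ a =>
        have : FF p * (KK p ^ c * CC p ^ n * EE p ^ (a + 1)) =
          ((q p ^ 2) ^ c) • (KK p ^ c * CC p ^ n * ((FF p * EE p) * EE p ^ a)) := by
          rw [← mul_assoc, ← mul_assoc, F_K_pow, smul_mul_assoc, smul_mul_assoc,
            mul_assoc _ (FF p), hC, pow_succ' (EE p)]
          simp only [mul_assoc]
        rw [this, FE_eq]
        apply Submodule.smul_mem
        have hK : ∀ m, KK p ^ c * CC p ^ n * (KK p ^ m * EE p ^ a) =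
            KK p ^ (m + c) * CC p ^ n * EE p ^ a := by
          intro m
          have : KK p ^ m * CC p ^ n = CC p ^ n * KK p ^ m :=
            (show Commute (KK p) (CC p) from K_C).pow_pow m n
          rw [← mul_assoc, mul_assoc (KK p ^ c), ← this, ← mul_assoc, ← pow_add, add_comm c]
        have h2 := hK 1
        rw [pow_one] at h2
        rw [Kinv_eq hp]
        simp only [sub_mul, add_mul, smul_mul_assoc, mul_sub, mul_add, mul_smul_comm, hK, h2]
        refine sub_mem ?_ (Submodule.smul_mem _ _ (add_mem (Submodule.smul_mem _ _ (mem_E _ _ _))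
          (Submodule.smul_mem _ _ (mem_E _ _ _))))
        rw [← mul_assoc, mul_assoc (KK p ^ c), ← pow_succ]
        exact mem_E _ _ _
    · have : FF p * (KK p ^ c * CC p ^ n * FF p ^ a) =
          ((q p ^ 2) ^ c) • (KK p ^ c * CC p ^ n * FF p ^ (a + 1)) := by
        rw [← mul_assoc, ← mul_assoc, F_K_pow, smul_mul_assoc, smul_mul_assoc, mul_assoc _ (FF p),
          hC, pow_succ' (FF p)]
        simp only [mul_assoc]
      rw [this]
      exact Submodule.smul_mem _ _ (mem_F _ _ _)
  | zero => simp
  | add x y _ _ h1 h2 => rw [mul_add]; exact add_mem h1 h2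
  | smul r x _ h => rw [mul_smul_comm]; exact Submodule.smul_mem _ _ h

lemma span_top (hp : 2 ≤ p) (x : Uq p) : x ∈ Submodule.span ℂ (spanSet p) := by
  have h1 : (1 : Uq p) ∈ Submodule.span ℂ (spanSet p) := by
    have := mem_E (p := p) 0 0 0
    simpa using this
  obtain ⟨y, rfl⟩ := RingQuot.mkAlgHom_surjective ℂ (rel p) x
  suffices h : ∀ z ∈ Submodule.span ℂ (spanSet p),
      RingQuot.mkAlgHom ℂ (rel p) y * z ∈ Submodule.span ℂ (spanSet p) by
    have := h 1 h1
    simpa using this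
  induction y using FreeAlgebra.induction with
  | grade0 r =>
    intro z hz
    rw [AlgHom.commutes, ← Algebra.smul_def]
    exact Submodule.smul_mem _ _ hz
  | grade1 g =>
    intro z hz
    cases g with
    | E => exact E_mem hp hz
    | F => exact F_mem hp hz
    | K => exact K_mem hz
    | Kinv =>
      change KKinv p * z ∈ _
      rw [Kinv_eq hp]
      exact Kpow_mem _ hz
  | mul a b ha hb =>
    intro z hz
    rw [map_mul, mul_assoc]
    exact ha _ (hb _ hz)
  | add a b ha hb =>
    intro z hz
    rw [map_add, add_mul]
    exact add_mem (ha _ hz) (hb _ hz)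

lemma form_ext (hp : 2 ≤ p) (φ ψ : Uq p →ₗ[ℂ] ℂ)
    (hφ : ∀ x, φ (KK p * x) = φ (x * KK p)) (hψ : ∀ x, ψ (KK p * x) = ψ (x * KK p))
    (h : ∀ c n : ℕ, φ (KK p ^ c * CC p ^ n) = ψ (KK p ^ c * CC p ^ n)) : φ = ψ := by
  have key : ∀ θ : Uq p →ₗ[ℂ] ℂ, (∀ x, θ (KK p * x) = θ (x * KK p)) →
      ∀ (r : ℂ) (x : Uq p), r ≠ 1 → KK p * x = r • (x * KK p) → θ (KK p * x) = 0 := by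
    intro θ hθ r x hr hx
    have h1 := hθ x
    have h2 := congrArg θ hx
    rw [map_smul, smul_eq_mul] at h2
    have h3 : (1 - r) * θ (KK p * x) = 0 := by rw [sub_mul, one_mul, ← sub_eq_zero] ; rw [← sub_eq_zero] at h2; rw [hθ] at h2 ⊢; linear_combination h2
    rcases mul_eq_zero.1 h3 with h4 | h4
    · exact absurd (by linear_combination -h4) hr
    · exact h4
  have comm : ∀ (r : ℂ) (z : Uq p) (c n : ℕ), KK p * z = r • (z * KK p) →
      KK p * (KK p ^ c * CC p ^ n * z) = r • (KK p ^ c * CC p ^ n * z * KK p) := by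
    intro r z c n hz
    have : Commute (KK p) (KK p ^ c * CC p ^ n) :=
      (Commute.refl (KK p)).pow_right c |>.mul_right
        ((show Commute (KK p) (CC p) from K_C).pow_right n)
    rw [← mul_assoc, this.eq, mul_assoc, hz, mul_smul_comm, mul_assoc, mul_assoc, mul_assoc]
  have shift : ∀ (c n : ℕ) (z : Uq p), KK p ^ c * CC p ^ n * z =
      KK p * (KK p ^ (2 * p - 1 + c) * CC p ^ n * z) := by
    intro c n z
    rw [← mul_assoc, ← mul_assoc, ← pow_succ',
      show 2 * p - 1 + c + 1 = 2 * p + c by omega, pow_add, rel_K2p, one_mul]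
  have hE : ∀ θ : Uq p →ₗ[ℂ] ℂ, (∀ x, θ (KK p * x) = θ (x * KK p)) → ∀ c n a : ℕ, 0 < a →
      θ (KK p ^ c * CC p ^ n * EE p ^ a) = 0 := by
    intro θ hθ c n a ha
    rcases lt_or_ge a p with hap | hap
    · rw [shift]
      exact key θ hθ _ _ (q_pow_ne hp ha hap) (comm _ _ _ _ (K_E_pow a))
    · rw [pow_eq_zero_of_le hap rel_Ep]; simp
  have hF : ∀ θ : Uq p →ₗ[ℂ] ℂ, (∀ x, θ (KK p * x) = θ (x * KK p)) → ∀ c n a : ℕ, 0 < a →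
      θ (KK p ^ c * CC p ^ n * FF p ^ a) = 0 := by
    intro θ hθ c n a ha
    rcases lt_or_ge a p with hap | hap
    · rw [shift]
      exact key θ hθ _ _ (by rw [Ne, inv_eq_one]; exact q_pow_ne hp ha hap)
        (comm _ _ _ _ (K_F_pow a))
    · rw [pow_eq_zero_of_le hap rel_Fp]; simp
  ext x
  have hx := span_top hp x
  induction hx using Submodule.span_induction with
  | mem x hx =>
    rcases hx with ⟨c, n, a, rfl⟩ | ⟨c, n, a, rfl⟩
    · rcases Nat.eq_zero_or_pos a with rfl | ha
      · simpa using h c n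
      · rw [hE φ hφ _ _ _ ha, hE ψ hψ _ _ _ ha]
    · rcases Nat.eq_zero_or_pos a with rfl | ha
      · simpa using h c n
      · rw [hF φ hφ _ _ _ ha, hF ψ hψ _ _ _ ha]
  | zero => simp
  | add x y _ _ h1 h2 => simp [h1, h2]
  | smul r x _ h => simp [h]

end spanning

section projective

variable {p : ℕ}

/-- Casimir eigenvalue. -/
def cas (p : ℕ) (m : ℤ) : ℂ := (q p ^ m + q p ^ (-m)) / (q p - (q p)⁻¹) ^ 2

lemma rho_Kinv {n : Type} [Fintype n] [DecidableEq n] (ρ : Uq p →ₐ[ℂ] Matrix n n ℂ)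
    (D : n → ℂ) (hD : ∀ i, D i ≠ 0) (h : ρ (KK p) = Matrix.diagonal D) :
    ρ (KKinv p) = Matrix.diagonal (fun i => (D i)⁻¹) := by
  have h1 : ρ (KK p) * ρ (KKinv p) = 1 := by rw [← map_mul, rel_KKinv, map_one]
  have h2 : Matrix.diagonal (fun i => (D i)⁻¹) * Matrix.diagonal D = 1 := by
    rw [Matrix.diagonal_mul_diagonal, ← Matrix.diagonal_one]
    congr 1
    ext i
    exact inv_mul_cancel₀ (hD i)
  rw [h] at h1
  calc ρ (KKinv p) = (Matrix.diagonal (fun i => (D i)⁻¹) * Matrix.diagonal D) * ρ (KKinv p) := by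
        rw [h2, one_mul]
    _ = _ := by rw [mul_assoc, h1, mul_one]

lemma PKdiag_ne (α : ℂ) (hα : α = 1 ∨ α = -1) (s : ℕ) (i : PIdx p s) : PKdiag p α s i ≠ 0 := by
  have hα0 : α ≠ 0 := by rcases hα with rfl | rfl <;> norm_num
  rcases i with i | i | i | i <;>
    simp only [PKdiag] <;>
    first
      | exact mul_ne_zero hα0 (zpow_ne_zero _ (q_ne p))
      | exact mul_ne_zero (neg_ne_zero.2 hα0) (zpow_ne_zero _ (q_ne p))

lemma PE_b_zero (α : ℂ) (s : ℕ) (h1 : 1 ≤ s) (h2 : s + 1 ≤ p) :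
    (PE p α s).mulVec (Pi.single (Sum.inl ⟨0, h1⟩) 1) =
      Pi.single (Sum.inr (Sum.inl ⟨p - s - 1, by omega⟩)) 1 := by
  rw [Matrix.mulVec_single_one]
  ext i
  rcases i with i | i | i | i <;> simp [PE, Matrix.col, Pi.single_apply, Fin.ext_iff]
  congr 1
  apply propext
  omega

lemma PE_b_succ (α : ℂ) (s j : ℕ) (hj : j + 1 < s) :
    (PE p α s).mulVec (Pi.single (Sum.inl ⟨j + 1, hj⟩) 1) =
      (α * qi p ((j + 1 : ℕ) : ℤ) * qi p ((s : ℤ) - ((j + 1 : ℕ) : ℤ))) •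
        Pi.single (Sum.inl ⟨j, by omega⟩) 1 +
      Pi.single (Sum.inr (Sum.inr (Sum.inr ⟨j, by omega⟩))) 1 := by
  rw [Matrix.mulVec_single_one]
  ext i
  rcases i with i | i | i | i <;> simp [PE, Matrix.col, Pi.single_apply, Fin.ext_iff]

lemma PF_x (s : ℕ) (h1 : 1 ≤ s) (h2 : s + 1 ≤ p) :
    (PF p s).mulVec (Pi.single (Sum.inr (Sum.inl ⟨p - s - 1, by omega⟩)) 1) =
      Pi.single (Sum.inr (Sum.inr (Sum.inr ⟨0, h1⟩))) 1 := by
  rw [Matrix.mulVec_single_one]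
  ext i
  rcases i with i | i | i | i <;> simp [PF, Matrix.col, Pi.single_apply, Fin.ext_iff]
  · omega
  · congr 1
    apply propext
    omega

lemma PF_b (s j : ℕ) (hj : j + 1 < s) :
    (PF p s).mulVec (Pi.single (Sum.inl ⟨j, by omega⟩) 1) =
      Pi.single (Sum.inl ⟨j + 1, hj⟩) 1 := by
  rw [Matrix.mulVec_single_one]
  ext i
  rcases i with i | i | i | i <;> simp [PF, Matrix.col, Pi.single_apply, Fin.ext_iff]
  all_goals omega

lemma PF_a (s j : ℕ) (hj : j + 1 < s) :
    (PF p s).mulVec (Pi.single (Sum.inr (Sum.inr (Sum.inr ⟨j, by omega⟩))) 1) =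
      Pi.single (Sum.inr (Sum.inr (Sum.inr ⟨j + 1, hj⟩))) 1 := by
  rw [Matrix.mulVec_single_one]
  ext i
  rcases i with i | i | i | i <;> simp [PF, Matrix.col, Pi.single_apply, Fin.ext_iff]

lemma PE_a_zero (α : ℂ) (s : ℕ) (h1 : 1 ≤ s) :
    (PE p α s).mulVec (Pi.single (Sum.inr (Sum.inr (Sum.inr ⟨0, h1⟩))) 1) = 0 := by
  rw [Matrix.mulVec_single_one]
  ext i
  rcases i with i | i | i | i <;> simp [PE, Matrix.col]

lemma PE_a_succ (α : ℂ) (s j : ℕ) (hj : j + 1 < s) :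
    (PE p α s).mulVec (Pi.single (Sum.inr (Sum.inr (Sum.inr ⟨j + 1, hj⟩))) 1) =
      (α * qi p ((j + 1 : ℕ) : ℤ) * qi p ((s : ℤ) - ((j + 1 : ℕ) : ℤ))) •
        Pi.single (Sum.inr (Sum.inr (Sum.inr ⟨j, by omega⟩))) 1 := by
  rw [Matrix.mulVec_single_one]
  ext i
  rcases i with i | i | i | i <;> simp [PE, Matrix.col, Pi.single_apply, Fin.ext_iff]

lemma cas_identity (hp : 2 ≤ p) (α : ℂ) (hα : α = 1 ∨ α = -1) (s j : ℤ) :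
    α * qi p j * qi p (s - j) + ((q p - (q p)⁻¹) ^ 2)⁻¹ *
      (q p * (α * q p ^ (s - 1 - 2 * j)) + (q p)⁻¹ * (α * q p ^ (s - 1 - 2 * j))⁻¹) =
      α * cas p s := by
  have hd := d_ne hp
  have hq := q_ne p
  have hα' : α⁻¹ = α := by rcases hα with rfl | rfl <;> norm_num
  rw [mul_inv, hα']
  unfold qi cas
  have e1 : q p ^ (s - 1 - 2 * j) = q p ^ s * (q p)⁻¹ * (q p ^ j)⁻¹ * (q p ^ j)⁻¹ := by
    rw [show s - 1 - 2 * j = s + (-1) + (-j) + (-j) by ring, zpow_add₀ hq, zpow_add₀ hq,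
      zpow_add₀ hq]
    simp [zpow_neg]
  have e2 : q p ^ (s - j) = q p ^ s * (q p ^ j)⁻¹ := by
    rw [sub_eq_add_neg, zpow_add₀ hq, zpow_neg]
  have hs : q p ^ s ≠ 0 := zpow_ne_zero _ hq
  have hj : q p ^ j ≠ 0 := zpow_ne_zero _ hq
  rw [zpow_neg, zpow_neg, zpow_neg, e1, e2]
  generalize q p - (q p)⁻¹ = d at *
  field_simp
  ring

variable {α : ℂ} {s : ℕ} {ρ : Uq p →ₐ[ℂ] Matrix (PIdx p s) (PIdx p s) ℂ}

lemma rho_C (hp : 2 ≤ p) (hα : α = 1 ∨ α = -1) 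
    (hρ : ρ (KK p) = PK p α s ∧ ρ (EE p) = PE p α s ∧ ρ (FF p) = PF p s) (v : PIdx p s → ℂ) :
    (ρ (CC p)).mulVec v = (PF p s).mulVec ((PE p α s).mulVec v) +
      (fun i => ((q p - (q p)⁻¹) ^ 2)⁻¹ * (q p * PKdiag p α s i + (q p)⁻¹ * (PKdiag p α s i)⁻¹)
        * v i) := by
  have hi := rho_Kinv ρ _ (PKdiag_ne α hα s) hρ.1
  rw [CC, map_add, map_mul, hρ.2.1, hρ.2.2, map_smul, map_add, map_smul, map_smul, hi, hρ.1,
    Matrix.add_mulVec, Matrix.mulVec_mulVec]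
  congr 1
  ext i
  simp [PK, Matrix.add_mulVec, Matrix.smul_mulVec, Matrix.mulVec_diagonal]
  ring

lemma mul_single_eq (f : PIdx p s → ℂ) (j : PIdx p s) :
    (fun i => f i * (Pi.single j 1 : PIdx p s → ℂ) i) = f j • (Pi.single j 1 : PIdx p s → ℂ) := by
  ext i
  by_cases h : i = j
  · subst h; simp
  · simp [h]

lemma rho_C_b (hp : 2 ≤ p) (hα : α = 1 ∨ α = -1) (h2 : s + 1 ≤ p)
    (hρ : ρ (KK p) = PK p α s ∧ ρ (EE p) = PE p α s ∧ ρ (FF p) = PF p s) (j : Fin s) :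
    (ρ (CC p)).mulVec (Pi.single (Sum.inl j) 1) = (α * cas p s) • Pi.single (Sum.inl j) 1 +
      Pi.single (Sum.inr (Sum.inr (Sum.inr j))) 1 := by
  obtain ⟨j, hj⟩ := j
  rw [rho_C hp hα hρ, mul_single_eq]
  rw [← cas_identity hp α hα s j]
  simp only [PKdiag]
  cases j with
  | zero =>
    rw [PE_b_zero α s hj h2, PF_x s hj h2]
    simp [qi, add_comm]
  | succ j =>
    rw [PE_b_succ α s j hj, Matrix.mulVec_add, Matrix.mulVec_smul, PF_b s j hj, PF_a s j hj]
    module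

lemma rho_C_a (hp : 2 ≤ p) (hα : α = 1 ∨ α = -1)
    (hρ : ρ (KK p) = PK p α s ∧ ρ (EE p) = PE p α s ∧ ρ (FF p) = PF p s) (j : Fin s) :
    (ρ (CC p)).mulVec (Pi.single (Sum.inr (Sum.inr (Sum.inr j))) 1) =
      (α * cas p s) • Pi.single (Sum.inr (Sum.inr (Sum.inr j))) 1 := by
  obtain ⟨j, hj⟩ := j
  rw [rho_C hp hα hρ, mul_single_eq]
  rw [← cas_identity hp α hα s j]
  simp only [PKdiag]
  cases j with
  | zero =>
    rw [PE_a_zero α s hj]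
    simp [qi]
  | succ j =>
    rw [PE_a_succ α s j hj, Matrix.mulVec_smul, PF_a s j hj]
    module

lemma rho_C_pow (hp : 2 ≤ p) (hα : α = 1 ∨ α = -1) (h2 : s + 1 ≤ p)
    (hρ : ρ (KK p) = PK p α s ∧ ρ (EE p) = PE p α s ∧ ρ (FF p) = PF p s) (j : Fin s) (n : ℕ) :
    (ρ (CC p) ^ n).mulVec (Pi.single (Sum.inl j) 1) =
      (α * cas p s) ^ n • Pi.single (Sum.inl j) 1 +
      ((n : ℂ) * (α * cas p s) ^ (n - 1)) • Pi.single (Sum.inr (Sum.inr (Sum.inr j))) 1 := by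
  induction n with
  | zero => rw [pow_zero, Matrix.one_mulVec]; simp
  | succ n ih =>
    rw [pow_succ', ← Matrix.mulVec_mulVec, ih, Matrix.mulVec_add, Matrix.mulVec_smul,
      Matrix.mulVec_smul, rho_C_b hp hα h2 hρ, rho_C_a hp hα hρ]
    generalize α * cas p s = c
    cases n with
    | zero => simp
    | succ n =>
      simp only [Nat.add_sub_cancel]
      push_cast
      module

lemma rho_entry (hp : 2 ≤ p) (hα : α = 1 ∨ α = -1) (h2 : s + 1 ≤ p)
    (hρ : ρ (KK p) = PK p α s ∧ ρ (EE p) = PE p α s ∧ ρ (FF p) = PF p s) (j : Fin s) (c n : ℕ) :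
    ρ (KK p ^ c * CC p ^ n) (Sum.inr (Sum.inr (Sum.inr j))) (Sum.inl j) =
      (α * q p ^ ((s : ℤ) - 1 - 2 * (j : ℕ))) ^ c * ((n : ℂ) * (α * cas p s) ^ (n - 1)) := by
  rw [map_mul, map_pow, map_pow, hρ.1, PK, Matrix.diagonal_pow, Matrix.diagonal_mul]
  have h := congrFun (rho_C_pow hp hα h2 hρ j n) (Sum.inr (Sum.inr (Sum.inr j)))
  rw [Matrix.mulVec_single_one] at h
  simp only [Matrix.col_apply] at h
  rw [h]
  simp [PKdiag]

/-- Sum of the weights of `X^+(s) ⊕ X^-(p-s)` to the power `c`. -/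
def SS (p : ℕ) (s : ℤ) (c : ℕ) : ℂ := ∑ i ∈ Finset.range p, (q p ^ (s - 1 - 2 * (i : ℤ))) ^ c

lemma SS_split (hp : 2 ≤ p) (s : ℕ) (h2 : s + 1 ≤ p) (c : ℕ) :
    SS p s c = (∑ j : Fin s, ((1 : ℂ) * q p ^ ((s : ℤ) - 1 - 2 * (j : ℕ))) ^ c) +
      ∑ j : Fin (p - s), ((-1 : ℂ) * q p ^ (((p - s : ℕ) : ℤ) - 1 - 2 * (j : ℕ))) ^ c := by
  have hq := q_ne p
  rw [Fin.sum_univ_eq_sum_range (fun j : ℕ => ((1 : ℂ) * q p ^ ((s : ℤ) - 1 - 2 * (j : ℤ))) ^ c),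
    Fin.sum_univ_eq_sum_range
      (fun j : ℕ => ((-1 : ℂ) * q p ^ (((p - s : ℕ) : ℤ) - 1 - 2 * (j : ℤ))) ^ c)]
  have : p = s + (p - s) := by omega
  unfold SS
  conv_lhs => rw [show Finset.range p = Finset.range (s + (p - s)) by rw [← this]]
  rw [Finset.sum_range_add]
  congr 1
  · simp
  · apply Finset.sum_congr rfl
    intro j _
    congr 1
    have hpp : q p ^ (p : ℤ) = -1 := by rw [zpow_natCast]; exact q_pow_p hp
    rw [← hpp, ← zpow_add₀ hq]
    have h3 : q p ^ (2 * (p : ℤ)) = 1 := by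
      rw [two_mul, zpow_add₀ hq, hpp]; norm_num
    have e : (p : ℤ) + (((p - s : ℕ) : ℤ) - 1 - 2 * (j : ℤ)) =
       2 * (p : ℤ) + ((s : ℤ) - 1 - 2 * ((s + j : ℕ) : ℤ)) := by
      push_cast [show s ≤ p by omega]
      ring
    rw [e, zpow_add₀ hq, h3, one_mul]

lemma cas_neg (hp : 2 ≤ p) (s : ℕ) (h2 : s ≤ p) : -1 * cas p ((p - s : ℕ) : ℤ) = cas p s := by
  have hq := q_ne p
  have hpp : q p ^ (p : ℤ) = -1 := by rw [zpow_natCast]; exact q_pow_p hp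
  unfold cas
  push_cast [h2]
  rw [zpow_neg, sub_eq_add_neg, zpow_add₀ hq, hpp, zpow_neg]
  simp
  ring

lemma G_eval (hp : 2 ≤ p)
    (ρP : (α : ℂ) → (s : ℕ) → (Uq p →ₐ[ℂ] Matrix (PIdx p s) (PIdx p s) ℂ))
    (hP : IsPRep p ρP) (s : ℕ) (h1 : 1 ≤ s) (h2 : s + 1 ≤ p) (c n : ℕ) :
    GOf p ρP s (KK p ^ c * CC p ^ n) = SS p s c * ((n : ℂ) * cas p s ^ (n - 1)) := by
  rw [SS_split hp s h2, add_mul, Finset.sum_mul, Finset.sum_mul]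
  simp only [GOf, LinearMap.add_apply, LinearMap.sum_apply, LinearMap.comp_apply,
    AlgHom.toLinearMap_apply]
  congr 1
  · apply Finset.sum_congr rfl
    intro j _
    have := rho_entry hp (Or.inl rfl) h2 (hP 1 (Or.inl rfl) s h1 (by omega)) j c n
    simp only [one_mul] at this ⊢
    exact this
  · apply Finset.sum_congr rfl
    intro j _
    have := rho_entry hp (Or.inr rfl) (by omega)
      (hP (-1) (Or.inr rfl) (p - s) (by omega) (by omega)) j c n
    rw [cas_neg hp s (by omega)] at this
    exact this

lemma G_Kinv (hp : 2 ≤ p)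
    (ρP : (α : ℂ) → (s : ℕ) → (Uq p →ₐ[ℂ] Matrix (PIdx p s) (PIdx p s) ℂ))
    (hP : IsPRep p ρP) (s : ℕ) (h1 : 1 ≤ s) (h2 : s + 1 ≤ p) (x : Uq p) :
    GOf p ρP s (KK p * x) = GOf p ρP s (x * KK p) := by
  simp only [GOf, LinearMap.add_apply, LinearMap.sum_apply, LinearMap.comp_apply,
    AlgHom.toLinearMap_apply, map_mul]
  congr 1
  · apply Finset.sum_congr rfl
    intro j _
    rw [(hP 1 (Or.inl rfl) s h1 (by omega)).1]
    change (PK p 1 s * ρP 1 s x) _ _ = (ρP 1 s x * PK p 1 s) _ _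
    rw [PK, Matrix.diagonal_mul, Matrix.mul_diagonal, mul_comm]
    rfl
  · apply Finset.sum_congr rfl
    intro j _
    rw [(hP (-1) (Or.inr rfl) (p - s) (by omega) (by omega)).1]
    change (PK p (-1) (p - s) * ρP (-1) (p - s) x) _ _ = (ρP (-1) (p - s) x * PK p (-1) (p - s)) _ _
    rw [PK, Matrix.diagonal_mul, Matrix.mul_diagonal, mul_comm]
    rfl

lemma SS_shift (hp : 2 ≤ p) (s k : ℤ) (c : ℕ) : SS p (s + k) c = (q p ^ k) ^ c * SS p s c := by
  unfold SS
  rw [Finset.mul_sum]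
  apply Finset.sum_congr rfl
  intro i _
  rw [← mul_pow, ← zpow_add₀ (q_ne p)]
  congr 2
  ring

lemma SS_zero (hp : 2 ≤ p) (s : ℤ) (c : ℕ) : SS p s c = 0 ∨ q p ^ (2 * c) = 1 := by
  have hq := q_ne p
  have h : ((q p ^ (2 * c))⁻¹ - 1) * SS p s c = 0 := by
    have e : SS p s c = (q p ^ (s - 1)) ^ c * ∑ i ∈ Finset.range p, ((q p ^ (2 * c))⁻¹) ^ i := by
      unfold SS
      rw [Finset.mul_sum]
      apply Finset.sum_congr rfl
      intro i _
      rw [sub_eq_add_neg, zpow_add₀ hq, mul_pow, zpow_neg, inv_pow, inv_pow, ← pow_mul]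
      congr 2
      rw [← zpow_natCast, ← zpow_natCast, ← zpow_mul]
      congr 1
      push_cast
      ring
    rw [e, mul_left_comm, mul_comm ((q p ^ (2 * c))⁻¹ - 1), geom_sum_mul, inv_pow, ← pow_mul,
      show 2 * c * p = 2 * p * c by ring, pow_mul, (q_prim hp).pow_eq_one]
    simp
  rcases mul_eq_zero.1 h with h | h
  · right
    rw [sub_eq_zero, inv_eq_one] at h
    exact h
  · left; exact h

end projective

section convolution

variable {p : ℕ} {n : Type} [Fintype n] [DecidableEq n]

/-- Partial evaluation of the first tensor factor in a matrix representation. -/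
def TT (ρ : Uq p →ₐ[ℂ] Matrix n n ℂ) : Uq p ⊗[ℂ] Uq p →ₐ[ℂ] Matrix n n (Uq p) :=
  Algebra.TensorProduct.lift ((Algebra.ofId ℂ (Uq p)).mapMatrix.comp ρ)
    (Matrix.scalarAlgHom n ℂ) (by
      intro x y
      change _ * _ = _ * _
      ext i j
      simp [Matrix.scalar_apply, Matrix.mul_diagonal, Matrix.diagonal_mul, Algebra.ofId_apply,
        Algebra.commutes])

lemma TT_tmul (ρ : Uq p →ₐ[ℂ] Matrix n n ℂ) (x y : Uq p) (i j : n) :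
    TT ρ (x ⊗ₜ y) i j = ρ x i j • y := by
  simp [TT, Matrix.scalar_apply, Matrix.mul_diagonal, Algebra.ofId_apply, Algebra.smul_def]

lemma conv_eq (Δ : Uq p →ₐ[ℂ] (Uq p ⊗[ℂ] Uq p)) (ρ : Uq p →ₐ[ℂ] Matrix n n ℂ)
    (ψ : Uq p →ₗ[ℂ] ℂ) (x : Uq p) :
    conv p Δ (chiOf p ρ) ψ x = ψ (Matrix.trace (TT ρ (Δ x))) := by
  simp only [conv, LinearMap.comp_apply, AlgHom.toLinearMap_apply]
  generalize Δ x = t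
  induction t using TensorProduct.induction_on with
  | zero => simp
  | tmul a b =>
    simp only [TensorProduct.map_tmul, LinearMap.mul'_apply, Matrix.trace, Matrix.diag_apply,
      TT_tmul, chiOf, LinearMap.comp_apply, AlgHom.toLinearMap_apply,
      Matrix.traceLinearMap_apply, ← Finset.sum_smul, map_smul, smul_eq_mul]
  | add a b ha hb => simp only [map_add, ha, hb, Matrix.trace_add]

lemma chi_K (ρ : Uq p →ₐ[ℂ] Matrix n n ℂ) (x : Uq p) :
    chiOf p ρ (KK p * x) = chiOf p ρ (x * KK p) := by
  simp only [chiOf, LinearMap.comp_apply, AlgHom.toLinearMap_apply,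
      Matrix.traceLinearMap_apply, map_mul]
  exact Matrix.trace_mul_comm _ _

lemma conv_K (Δ : Uq p →ₐ[ℂ] (Uq p ⊗[ℂ] Uq p)) (hΔ : IsCoprod p Δ) (φ ψ : Uq p →ₗ[ℂ] ℂ)
    (hφ : ∀ x, φ (KK p * x) = φ (x * KK p)) (hψ : ∀ x, ψ (KK p * x) = ψ (x * KK p)) (x : Uq p) :
    conv p Δ φ ψ (KK p * x) = conv p Δ φ ψ (x * KK p) := by
  simp only [conv, LinearMap.comp_apply, AlgHom.toLinearMap_apply, map_mul, hΔ.2.2.1]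
  generalize Δ x = t
  induction t using TensorProduct.induction_on with
  | zero => simp
  | tmul a b => simp [hφ, hψ]
  | add a b ha hb => simp only [mul_add, add_mul, map_add, ha, hb]

lemma conv_chi1 (hp : 2 ≤ p) (ρ : Uq p →ₐ[ℂ] Matrix (Fin 1) (Fin 1) ℂ)
    (hρ : ρ (KK p) = XK p (-1) 1 ∧ ρ (EE p) = XE p (-1) 1 ∧ ρ (FF p) = XF 1)
    (Δ : Uq p →ₐ[ℂ] (Uq p ⊗[ℂ] Uq p)) (hΔ : IsCoprod p Δ) (ψ : Uq p →ₗ[ℂ] ℂ) (c m : ℕ) :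
    conv p Δ (chiOf p ρ) ψ (KK p ^ c * CC p ^ m) =
      (-1) ^ c * (-1) ^ m * ψ (KK p ^ c * CC p ^ m) := by
  obtain ⟨hK, hE, hF⟩ := hρ
  have hKi := rho_Kinv ρ (fun _ => -1) (by intro i; norm_num) (by rw [hK]; ext i j; fin_cases i; fin_cases j; simp [XK])
  have tK : TT ρ (Δ (KK p)) = Matrix.scalar (Fin 1) ((-1 : ℂ) • KK p) := by
    ext i j
    fin_cases i; fin_cases j
    simp [hΔ.2.2.1, TT_tmul, hK, XK]
  have tKi : TT ρ (Δ (KKinv p)) = Matrix.scalar (Fin 1) ((-1 : ℂ) • KKinv p) := by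
    ext i j
    fin_cases i; fin_cases j
    rw [hΔ.2.2.2, TT_tmul, hKi]
    norm_num
  have tE : TT ρ (Δ (EE p)) = Matrix.scalar (Fin 1) (EE p) := by
    ext i j
    fin_cases i; fin_cases j
    simp [hΔ.1, TT_tmul, hE, XE]
  have tF : TT ρ (Δ (FF p)) = Matrix.scalar (Fin 1) ((-1 : ℂ) • FF p) := by
    ext i j
    fin_cases i; fin_cases j
    rw [hΔ.2.1, map_add, Matrix.add_apply, TT_tmul, TT_tmul, hKi, hF]
    norm_num [XF]
  have tC : TT ρ (Δ (CC p)) = Matrix.scalar (Fin 1) ((-1 : ℂ) • CC p) := by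
    rw [CC]
    simp only [map_add, map_mul, map_smul, tK, tKi, tE, tF]
    ext i j
    fin_cases i; fin_cases j
    simp [Matrix.scalar_apply]
    module
  rw [conv_eq, map_mul, map_pow, map_pow, map_mul, map_pow, map_pow, tK, tC, ← map_pow, ← map_pow,
    ← map_mul]
  simp only [Matrix.trace, Matrix.scalar_apply, Matrix.diag_apply, Matrix.diagonal_apply_eq,
    Finset.univ_unique, Finset.sum_const, Finset.card_singleton, one_smul]
  have e : ((-1 : ℂ) • KK p) ^ c * ((-1 : ℂ) • CC p) ^ m = ((-1 : ℂ) ^ c * (-1) ^ m) • (KK p ^ c * CC p ^ m) := by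
    rw [smul_pow, smul_pow, smul_mul_assoc,
      mul_smul_comm, smul_smul]
  rw [e, map_smul, smul_eq_mul]

lemma TT2 (hp : 2 ≤ p) (ρ : Uq p →ₐ[ℂ] Matrix (Fin 2) (Fin 2) ℂ)
    (hρ : ρ (KK p) = XK p 1 2 ∧ ρ (EE p) = XE p 1 2 ∧ ρ (FF p) = XF 2)
    (Δ : Uq p →ₐ[ℂ] (Uq p ⊗[ℂ] Uq p)) (hΔ : IsCoprod p Δ) :
    TT ρ (Δ (KK p)) = !![q p • KK p, 0; 0, (q p)⁻¹ • KK p] ∧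
    TT ρ (Δ (CC p)) = !![(q p)⁻¹ • CC p + (q p * (q p - (q p)⁻¹)⁻¹) • KK p,
      (q p)⁻¹ • (FF p * KK p); EE p,
      q p • CC p - ((q p)⁻¹ * (q p - (q p)⁻¹)⁻¹) • KK p] := by
  obtain ⟨hK, hE, hF⟩ := hρ
  have hq := q_ne p
  have hd := d_ne hp
  have hKi := rho_Kinv ρ _ (by intro i; exact mul_ne_zero one_ne_zero (zpow_ne_zero _ hq)) hK
  have tK : TT ρ (Δ (KK p)) = !![q p • KK p, 0; 0, (q p)⁻¹ • KK p] := by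
    ext i j
    fin_cases i <;> fin_cases j <;> simp [hΔ.2.2.1, TT_tmul, hK, XK]
  have tKi : TT ρ (Δ (KKinv p)) = !![(q p)⁻¹ • KKinv p, 0; 0, q p • KKinv p] := by
    ext i j
    fin_cases i <;> fin_cases j <;> simp [hΔ.2.2.2, TT_tmul, hKi]
  have tE : TT ρ (Δ (EE p)) = !![EE p, KK p; 0, EE p] := by
    ext i j
    fin_cases i <;> fin_cases j <;> simp [hΔ.1, TT_tmul, hE, XE, qi]
    rw [div_self hd]
    simp
  have tF : TT ρ (Δ (FF p)) = !![(q p)⁻¹ • FF p, 0; 1, q p • FF p] := by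
    ext i j
    fin_cases i <;> fin_cases j <;> simp [hΔ.2.1, TT_tmul, hF, hKi, XF]
  refine ⟨tK, ?_⟩
  rw [CC]
  simp only [map_add, map_mul, map_smul, tK, tKi, tE, tF]
  generalize hd' : q p - (q p)⁻¹ = d at *
  ext i j
  fin_cases i <;> fin_cases j <;> simp [Matrix.mul_apply, Fin.sum_univ_two]
  · match_scalars <;> field_simp <;> rw [← hd'] <;> field_simp <;> ring
  · match_scalars <;> field_simp <;> rw [← hd'] <;> field_simp <;> ring

lemma M_sq (hp : 2 ≤ p) (M : Matrix (Fin 2) (Fin 2) (Uq p))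
    (hM : M = !![(q p)⁻¹ • CC p + (q p * (q p - (q p)⁻¹)⁻¹) • KK p,
      (q p)⁻¹ • (FF p * KK p); EE p,
      q p • CC p - ((q p)⁻¹ * (q p - (q p)⁻¹)⁻¹) • KK p]) :
    M * M = Matrix.scalar (Fin 2) ((q p + (q p)⁻¹) • CC p) * M -
      Matrix.scalar (Fin 2) (CC p * CC p + algebraMap ℂ _ ((q p - (q p)⁻¹) ^ 2)⁻¹) := by
  have hq := q_ne p
  have hd := d_ne hp
  have h1 : FF p * (KK p * EE p) = q p ^ 2 • (KK p * CC p) - ((q p - (q p)⁻¹) ^ 2)⁻¹ •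
      (q p ^ 3 • (KK p * KK p) + q p • 1) := by
    rw [← mul_assoc, FK, smul_mul_assoc, mul_assoc, FE_eq, mul_sub, mul_smul_comm, mul_add,
      mul_smul_comm, mul_smul_comm, rel_KKinv]
    generalize hd' : q p - (q p)⁻¹ = d at *
    match_scalars <;> field_simp
  have h2 : EE p * (FF p * KK p) = (CC p * KK p) - ((q p - (q p)⁻¹) ^ 2)⁻¹ •
      ((q p)⁻¹ • (KK p * KK p) + q p • 1) := by
    rw [← mul_assoc, EF_eq hp, sub_mul, smul_mul_assoc, add_mul, smul_mul_assoc, smul_mul_assoc,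
      rel_KinvK]
  have h3 : CC p * (FF p * KK p) = FF p * (KK p * CC p) := by
    rw [← mul_assoc, ← F_C hp, mul_assoc, K_C]
  have h4 : FF p * (KK p * KK p) = q p ^ 2 • (KK p * (FF p * KK p)) := by
    rw [← mul_assoc, FK, smul_mul_assoc, mul_assoc, FK]
  have h5 := E_C hp
  have h6 := K_C (p := p)
  have h7 := EK (p := p)
  have h8 : KK p * (FF p * KK p) = (q p ^ 2)⁻¹ • (FF p * (KK p * KK p)) := by
    rw [h4, smul_smul, inv_mul_cancel₀ (pow_ne_zero _ hq), one_smul]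
  subst hM
  generalize hd' : q p - (q p)⁻¹ = d at *
  ext i j
  rw [Algebra.algebraMap_eq_smul_one]
  fin_cases i <;> fin_cases j <;>
    simp only [Matrix.sub_apply, Matrix.mul_apply, Fin.sum_univ_two, Matrix.scalar_apply,
      Matrix.diagonal_mul, Matrix.of_apply, Matrix.cons_val', Matrix.cons_val_zero,
      Matrix.cons_val_one, Matrix.cons_val_fin_one, Fin.zero_eta, Fin.mk_one, Fin.isValue,
      Matrix.diagonal_apply_eq, ne_eq, zero_ne_one, one_ne_zero, not_false_eq_true,
      Matrix.diagonal_apply_ne, mul_add, add_mul, mul_sub, sub_mul, smul_mul_assoc, mul_smul_comm,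
      mul_assoc, h1, h2, h3, h5, h6, h7, h8, zero_mul, add_zero, zero_add] <;>
    match_scalars <;> field_simp <;> (try rw [← hd']) <;> (try field_simp) <;> (try ring)

end convolution

section main

variable {p : ℕ}

/-- The dual number `a + b ε`. -/
def dual (a b : ℂ) : DualNumber ℂ := TrivSqZeroExt.inl a + TrivSqZeroExt.inr b

lemma dual_fst (a b : ℂ) : (dual a b).fst = a := by simp [dual]

lemma dual_snd (a b : ℂ) : (dual a b).snd = b := by simp [dual]

lemma dual_pow_snd (a b : ℂ) (n : ℕ) : (dual a b ^ n).snd = (n : ℂ) * a ^ (n - 1) * b := by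
  rw [TrivSqZeroExt.snd_pow, dual_fst, dual_snd]
  simp [mul_assoc]

lemma qi_ne (hp : 2 ≤ p) (s : ℕ) (h1 : 1 ≤ s) (h2 : s + 1 ≤ p) : qi p s ≠ 0 := by
  unfold qi
  refine div_ne_zero ?_ (d_ne hp)
  intro h
  have hq := q_ne p
  have hx : q p ^ s ≠ 0 := pow_ne_zero _ hq
  rw [zpow_neg, zpow_natCast] at h
  field_simp at h
  apply q_pow_ne hp (m := s) (by omega) (by omega)
  rw [mul_comm, pow_mul]
  linear_combination h

/-- The dual-number identities satisfied by the Casimir eigenvalues. -/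
lemma dual_identities (hp : 2 ≤ p) (s : ℕ) (h1 : 1 ≤ s) (h2 : s + 1 ≤ p) :
    dual (cas p ((s : ℤ) + 1)) (qi p ((s : ℤ) + 1) / qi p s) +
      dual (cas p ((s : ℤ) - 1)) (qi p ((s : ℤ) - 1) / qi p s) =
      TrivSqZeroExt.inl (q p + (q p)⁻¹) * dual (cas p s) 1 ∧
    dual (cas p ((s : ℤ) + 1)) (qi p ((s : ℤ) + 1) / qi p s) *
      dual (cas p ((s : ℤ) - 1)) (qi p ((s : ℤ) - 1) / qi p s) =
      dual (cas p s) 1 * dual (cas p s) 1 +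
        TrivSqZeroExt.inl ((q p - (q p)⁻¹) ^ 2)⁻¹ := by
  have hq := q_ne p
  have hd := d_ne hp
  have hs := qi_ne hp s h1 h2
  have e1 : q p ^ ((s : ℤ) + 1) = q p ^ (s : ℤ) * q p := by rw [zpow_add₀ hq, zpow_one]
  have e2 : q p ^ ((s : ℤ) - 1) = q p ^ (s : ℤ) * (q p)⁻¹ := by
    rw [zpow_sub₀ hq, zpow_one, div_eq_mul_inv]
  have hx : q p ^ (s : ℤ) ≠ 0 := zpow_ne_zero _ hq
  have hqi : ∀ m : ℤ, qi p m / qi p s =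
      (q p ^ m - (q p ^ m)⁻¹) / (q p ^ (s : ℤ) - (q p ^ (s : ℤ))⁻¹) := by
    intro m
    unfold qi
    rw [div_div_div_cancel_right₀ hd, zpow_neg, zpow_neg]
  have hs' : q p ^ (s : ℤ) - (q p ^ (s : ℤ))⁻¹ ≠ 0 := by
    intro h
    apply hs
    unfold qi
    rw [zpow_neg, h, zero_div]
  rw [hqi, hqi]
  unfold cas
  rw [zpow_neg, zpow_neg, zpow_neg, e1, e2]
  generalize q p ^ (s : ℤ) = x at *
  have hd2 : q p ^ 2 - 1 ≠ 0 := by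
    intro h
    apply hd
    field_simp
    rw [h, mul_zero]
  have hs2 : x ^ 2 - 1 ≠ 0 := by
    intro h
    apply hs'
    field_simp
    rw [h, mul_zero]
  clear hs hqi e1 e2
  generalize q p = r at *
  constructor
  · apply TrivSqZeroExt.ext
    · simp [dual]
      field_simp
      ring
    · simp [dual]
      field_simp
      ring
  · apply TrivSqZeroExt.ext
    · simp [dual]
      field_simp
      ring
    · simp [dual]
      field_simp
      ring

lemma trace_scalar_mul (r : Uq p) (N : Matrix (Fin 2) (Fin 2) (Uq p)) :
    Matrix.trace (Matrix.scalar (Fin 2) r * N) = r * Matrix.trace N := by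
  simp [Matrix.trace, Matrix.scalar_apply, Matrix.diagonal_mul, mul_add]

lemma conv_chi2 (hp : 2 ≤ p) (ρ : Uq p →ₐ[ℂ] Matrix (Fin 2) (Fin 2) ℂ)
    (hρ : ρ (KK p) = XK p 1 2 ∧ ρ (EE p) = XE p 1 2 ∧ ρ (FF p) = XF 2)
    (Δ : Uq p →ₐ[ℂ] (Uq p ⊗[ℂ] Uq p)) (hΔ : IsCoprod p Δ)
    (ρP : (α : ℂ) → (s : ℕ) → (Uq p →ₐ[ℂ] Matrix (PIdx p s) (PIdx p s) ℂ))
    (hP : IsPRep p ρP) (s : ℕ) (h1 : 1 ≤ s) (h2 : s + 1 ≤ p) (c n : ℕ) :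
    conv p Δ (chiOf p ρ) (GOf p ρP s) (KK p ^ c * CC p ^ n) =
      qi p ((s : ℤ) - 1) / qi p s * (SS p ((s : ℤ) - 1) c * (n * cas p ((s : ℤ) - 1) ^ (n - 1))) +
      qi p ((s : ℤ) + 1) / qi p s *
        (SS p ((s : ℤ) + 1) c * (n * cas p ((s : ℤ) + 1) ^ (n - 1))) := by
  have hq := q_ne p
  have hd := d_ne hp
  obtain ⟨tK, tC⟩ := TT2 hp ρ hρ Δ hΔ
  rw [conv_eq, map_mul, map_pow, map_pow, map_mul, map_pow, map_pow]
  have hsq := M_sq hp _ tC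
  have hG := G_eval hp ρP hP s h1 h2
  set G := GOf p ρP s with hGdef
  set D := TT ρ (Δ (KK p)) with hD
  set M := TT ρ (Δ (CC p)) with hM
  set S := SS p s with hS
  have hKC : Commute (KK p) (CC p) := K_C
  have hDd : D = Matrix.diagonal ![q p • KK p, (q p)⁻¹ • KK p] := by
    rw [tK]
    ext i j
    fin_cases i <;> fin_cases j <;> simp
  have hDc : D ^ c = Matrix.diagonal ![q p ^ c • KK p ^ c, ((q p)⁻¹) ^ c • KK p ^ c] := by
    rw [hDd, Matrix.diagonal_pow]
    congr 1
    ext i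
    fin_cases i <;> simp [smul_pow]
  have hcom : ∀ r : Uq p, Commute (KK p) r →
      D ^ c * Matrix.scalar (Fin 2) r = Matrix.scalar (Fin 2) r * D ^ c := by
    intro r hr
    have hr' := hr.pow_left c
    rw [hDc, Matrix.scalar_apply, Matrix.diagonal_mul_diagonal, Matrix.diagonal_mul_diagonal]
    congr 1
    ext i
    fin_cases i <;> simp [hr'.eq]
  have hcen1 : Commute (KK p) ((q p + (q p)⁻¹) • CC p) := hKC.smul_right _
  have hcen2 : Commute (KK p) (CC p * CC p + algebraMap ℂ _ ((q p - (q p)⁻¹) ^ 2)⁻¹) :=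
    (hKC.mul_right hKC).add_right (Algebra.commutes _ _).symm
  -- recurrence for the traces
  have hrec : ∀ n, Matrix.trace (D ^ c * M ^ (n + 2)) +
      (CC p * CC p + algebraMap ℂ _ ((q p - (q p)⁻¹) ^ 2)⁻¹) * Matrix.trace (D ^ c * M ^ n) =
      ((q p + (q p)⁻¹) • CC p) * Matrix.trace (D ^ c * M ^ (n + 1)) := by
    intro n
    rw [eq_sub_iff_add_eq] at hsq
    rw [← trace_scalar_mul, ← trace_scalar_mul, ← mul_assoc, ← mul_assoc, ← hcom _ hcen1,
      ← hcom _ hcen2, mul_assoc, mul_assoc, ← Matrix.trace_add, ← mul_add, pow_succ' M n,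
      ← mul_assoc _ M, ← hsq, add_mul]
    congr 3
    rw [pow_add, pow_two]
    rw [← pow_two, ← pow_add, ← pow_add, add_comm]
  have hCK : ∀ k m : ℕ, CC p ^ k * KK p ^ m = KK p ^ m * CC p ^ k :=
    fun k m => (hKC.pow_pow m k).eq.symm
  have ht0 : Matrix.trace (D ^ c * M ^ 0) = (q p ^ c + (q p ^ c)⁻¹) • KK p ^ c := by
    rw [pow_zero, mul_one, hDc, Matrix.trace_diagonal]
    simp [add_smul]
  have ht1 : Matrix.trace (D ^ c * M ^ 1) =
      (q p ^ c * (q p)⁻¹ + (q p ^ c)⁻¹ * q p) • (KK p ^ c * CC p) +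
      ((q p ^ c * q p - (q p ^ c)⁻¹ * (q p)⁻¹) * (q p - (q p)⁻¹)⁻¹) • KK p ^ (c + 1) := by
    rw [pow_one, hDc, tC]
    simp only [Matrix.trace, Matrix.diag_apply, Fin.sum_univ_two, Matrix.diagonal_mul,
      Matrix.of_apply, Matrix.cons_val', Matrix.cons_val_zero,
      Matrix.cons_val_one, Matrix.cons_val_fin_one, Fin.isValue, mul_add, mul_sub,
      smul_mul_assoc, mul_smul_comm, ← pow_succ, inv_pow]
    module
  have hQ : ∀ m, S m * (q p ^ m)⁻¹ = S m * q p ^ m := by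
    intro m
    rcases SS_zero hp s m with h | h
    · rw [hS, h]; simp
    · congr 1
      apply inv_eq_of_mul_eq_one_left
      rw [← pow_add, ← two_mul, h]
  obtain ⟨d1, d2⟩ := dual_identities hp s h1 h2
  set z := dual (cas p s) 1 with hz
  set zp := dual (cas p ((s : ℤ) + 1)) (qi p ((s : ℤ) + 1) / qi p s) with hzp
  set zm := dual (cas p ((s : ℤ) - 1)) (qi p ((s : ℤ) - 1) / qi p s) with hzm
  have hGz : ∀ m k, G (KK p ^ m * CC p ^ k) = S m * (z ^ k).snd := by
    intro m k
    rw [hG, hz, dual_pow_snd, mul_one]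
  have main : ∀ n k, G (CC p ^ k * Matrix.trace (D ^ c * M ^ n)) =
      q p ^ c * S c * (z ^ k * (zp ^ n + zm ^ n)).snd := by
    intro n
    induction n using Nat.twoStepInduction with
    | zero =>
      intro k
      rw [ht0, mul_smul_comm, hCK, map_smul, hGz, smul_eq_mul]
      have : z ^ k * (zp ^ 0 + zm ^ 0) = z ^ k + z ^ k := by ring
      rw [this, TrivSqZeroExt.snd_add]
      linear_combination (z ^ k).snd * hQ c
    | one =>
      intro k
      rw [ht1, mul_add, mul_smul_comm, mul_smul_comm, ← mul_assoc, hCK, hCK, mul_assoc, ← pow_succ,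
        map_add, map_smul, map_smul, hGz, hGz, smul_eq_mul, smul_eq_mul]
      have : z ^ k * (zp ^ 1 + zm ^ 1) =
          TrivSqZeroExt.inl (q p + (q p)⁻¹) * z ^ (k + 1) := by
        rw [pow_one, pow_one, d1]; ring
      rw [this]
      have e : ∀ (a : ℂ) (y : DualNumber ℂ), (TrivSqZeroExt.inl a * y).snd = a * y.snd := by
        intro a y; simp
      rw [e]
      have h3 := hQ (c + 1)
      rw [pow_succ, mul_inv] at h3
      linear_combination (z ^ (k + 1)).snd * q p * hQ c -
        (z ^ k).snd * (q p - (q p)⁻¹)⁻¹ * h3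
    | more n ih0 ih1 =>
      intro k
      have e : ∀ (a : ℂ) (y : DualNumber ℂ), (TrivSqZeroExt.inl a * y).snd = a * y.snd := by
        intro a y; simp
      have h3 := congrArg (fun y => G (CC p ^ k * y)) (hrec n)
      simp only [mul_add, add_mul, map_add, Algebra.algebraMap_eq_smul_one, smul_mul_assoc,
        mul_smul_comm, one_mul, map_smul, smul_eq_mul] at h3
      rw [← mul_assoc, ← mul_assoc, ← pow_succ, ← pow_succ, ← mul_assoc, ← pow_succ,
        ih0, ih0, ih1] at h3
      have h4 : z ^ k * (zp ^ (n + 2) + zm ^ (n + 2)) +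
          z ^ (k + 1 + 1) * (zp ^ n + zm ^ n) +
          TrivSqZeroExt.inl ((q p - (q p)⁻¹) ^ 2)⁻¹ * (z ^ k * (zp ^ n + zm ^ n)) =
          TrivSqZeroExt.inl (q p + (q p)⁻¹) * (z ^ (k + 1) * (zp ^ (n + 1) + zm ^ (n + 1))) := by
        linear_combination (-z ^ k * (zp ^ n + zm ^ n)) * d2 +
          (z ^ k * (zp ^ (n + 1) + zm ^ (n + 1))) * d1
      have h5 := congrArg TrivSqZeroExt.snd h4
      rw [TrivSqZeroExt.snd_add, TrivSqZeroExt.snd_add, e, e] at h5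
      linear_combination h3 - q p ^ c * S c * h5
  have hfin := main n 0
  rw [pow_zero, one_mul, pow_zero, one_mul, TrivSqZeroExt.snd_add, hzp, hzm, dual_pow_snd,
    dual_pow_snd] at hfin
  rw [hfin, SS_shift hp, sub_eq_add_neg, SS_shift hp, zpow_one, zpow_neg, zpow_one, inv_pow,
    ← hS]
  linear_combination (-(qi p ((s : ℤ) + -1) / qi p s) * (n * cas p ((s : ℤ) + -1) ^ (n - 1))) *
    hQ c

end main

section final

variable {p : ℕ}

lemma qi_p (hp : 2 ≤ p) : qi p (p : ℤ) = 0 := by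
  unfold qi
  rw [zpow_neg, zpow_natCast, q_pow_p hp]
  norm_num

lemma SS_dual (hp : 2 ≤ p) (s : ℕ) (h2 : s ≤ p) (c : ℕ) :
    SS p ((p - s : ℕ) : ℤ) c = (-1) ^ c * SS p s c := by
  have hq := q_ne p
  rw [show ((p - s : ℕ) : ℤ) = (s : ℤ) + ((p : ℤ) - 2 * s) by omega, SS_shift hp]
  rcases SS_zero hp s c with h | h
  · rw [h]; simp
  · congr 1
    rw [zpow_sub₀ hq, zpow_natCast, q_pow_p hp, div_pow]
    have : (q p ^ (2 * (s : ℤ))) ^ c = 1 := by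
      rw [show (2 * (s : ℤ)) = ((2 * s : ℕ) : ℤ) by push_cast; ring, zpow_natCast, ← pow_mul,
        show 2 * s * c = 2 * c * s by ring, pow_mul, h, one_pow]
    rw [this, div_one]

end final

/-- there exist scalars `β_s, γ_s, λ_s, η_s, δ_s` such that the
products `χ^+_2 G_s` and `χ^-_1 G_s` have the stated shapes. -/
theorem statement_17 (p : ℕ) (hp : 2 ≤ p)
    (ρX : (α : ℂ) → (s : ℕ) → (Uq p →ₐ[ℂ] Matrix (Fin s) (Fin s) ℂ))
    (hX : IsXRep p ρX)
    (ρP : (α : ℂ) → (s : ℕ) → (Uq p →ₐ[ℂ] Matrix (PIdx p s) (PIdx p s) ℂ))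
    (hP : IsPRep p ρP)
    (Δ : Uq p →ₐ[ℂ] (Uq p ⊗[ℂ] Uq p)) (hΔ : IsCoprod p Δ) :
    ∃ beta gamma lam eta delta : ℕ → ℂ,
      (∀ s : ℕ, 2 ≤ s → s ≤ p - 2 →
        conv p Δ (chiOf p (ρX 1 2)) (GOf p ρP s) =
          beta s • GOf p ρP (s - 1) + gamma s • GOf p ρP (s + 1)
            + lam s • (chiOf p (ρX 1 (s - 1)) + chiOf p (ρX (-1) (p - s + 1))
                - chiOf p (ρX 1 (s + 1)) - chiOf p (ρX (-1) (p - s - 1))))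
      ∧ (conv p Δ (chiOf p (ρX 1 2)) (GOf p ρP 1) =
          gamma 1 • GOf p ρP 2
            + lam 1 • (chiOf p (ρX (-1) p) - chiOf p (ρX 1 2) - chiOf p (ρX (-1) (p - 2))))
      ∧ (conv p Δ (chiOf p (ρX 1 2)) (GOf p ρP (p - 1)) =
          beta (p - 1) • GOf p ρP (p - 2)
            + lam (p - 1) • (chiOf p (ρX 1 (p - 2)) + chiOf p (ρX (-1) 2)
                - chiOf p (ρX 1 p)))
      ∧ (∀ s : ℕ, 1 ≤ s → s ≤ p - 1 →
          conv p Δ (chiOf p (ρX (-1) 1)) (GOf p ρP s) =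
            eta s • GOf p ρP (p - s)
              + delta s • (chiOf p (ρX 1 (p - s)) + chiOf p (ρX (-1) s))) := by
  refine ⟨fun s => qi p ((s : ℤ) - 1) / qi p s,
    fun s => qi p ((s : ℤ) + 1) / qi p s, fun _ => 0, fun _ => -1, fun _ => 0, ?_, ?_, ?_, ?_⟩
  · intro s hs1 hs2
    rw [zero_smul, add_zero]
    have hG := fun s h1 h2 => G_Kinv hp ρP hP s h1 h2
    apply form_ext hp
    · exact conv_K Δ hΔ _ _ (chi_K _) (hG s (by omega) (by omega))
    · intro x
      simp only [LinearMap.add_apply, LinearMap.smul_apply, hG (s - 1) (by omega) (by omega) x,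
        hG (s + 1) (by omega) (by omega) x]
    · intro c n
      rw [conv_chi2 hp _ (hX 1 (Or.inl rfl) 2 (by omega) hp) Δ hΔ ρP hP s (by omega) (by omega)]
      simp only [LinearMap.add_apply, LinearMap.smul_apply, smul_eq_mul,
        G_eval hp ρP hP (s - 1) (by omega) (by omega),
        G_eval hp ρP hP (s + 1) (by omega) (by omega)]
      push_cast [show 1 ≤ s by omega]
      rfl
  · rw [zero_smul, add_zero]
    have hG := fun s h1 h2 => G_Kinv hp ρP hP s h1 h2
    have h0 : qi p 0 = 0 := by simp [qi]
    have key := conv_chi2 hp _ (hX 1 (Or.inl rfl) 2 (by omega) hp) Δ hΔ ρP hP 1 (by omega)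
      (by omega)
    by_cases h3 : 3 ≤ p
    · apply form_ext hp
      · exact conv_K Δ hΔ _ _ (chi_K _) (hG 1 (by omega) (by omega))
      · intro x
        simp only [LinearMap.smul_apply, hG 2 (by omega) (by omega) x]
      · intro c n
        rw [key]
        simp only [LinearMap.smul_apply, smul_eq_mul, G_eval hp ρP hP 2 (by omega) (by omega)]
        push_cast
        norm_num [h0]
    · have h2 : qi p 2 = 0 := by
        obtain rfl : p = 2 := by omega
        exact qi_p (by norm_num)
      have e2 : qi p (((1 : ℕ) : ℤ) + 1) = 0 := by norm_num [h2]
      have e1 : qi p (((1 : ℕ) : ℤ) - 1) = 0 := by norm_num [h0]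
      beta_reduce
      rw [e2, zero_div, zero_smul]
      apply form_ext hp
      · exact conv_K Δ hΔ _ _ (chi_K _) (hG 1 (by omega) (by omega))
      · intro x; simp
      · intro c n
        rw [key, e1, e2]
        simp
  · rw [zero_smul, add_zero]
    have hG := fun s h1 h2 => G_Kinv hp ρP hP s h1 h2
    have key := conv_chi2 hp _ (hX 1 (Or.inl rfl) 2 (by omega) hp) Δ hΔ ρP hP (p - 1) (by omega)
      (by omega)
    have e2 : qi p (((p - 1 : ℕ) : ℤ) + 1) = 0 := by
      push_cast [show 1 ≤ p by omega]
      rw [sub_add_cancel]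
      exact qi_p hp
    by_cases h3 : 3 ≤ p
    · apply form_ext hp
      · exact conv_K Δ hΔ _ _ (chi_K _) (hG (p - 1) (by omega) (by omega))
      · intro x
        simp only [LinearMap.smul_apply, hG (p - 2) (by omega) (by omega) x]
      · intro c n
        rw [key, e2]
        simp only [LinearMap.smul_apply, smul_eq_mul,
          G_eval hp ρP hP (p - 2) (by omega) (by omega)]
        rw [show ((p - 2 : ℕ) : ℤ) = ((p - 1 : ℕ) : ℤ) - 1 by omega]
        simp
    · have e1 : qi p (((p - 1 : ℕ) : ℤ) - 1) = 0 := by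
        rw [show ((p - 1 : ℕ) : ℤ) - 1 = 0 by omega]
        simp [qi]
      beta_reduce
      rw [e1, zero_div, zero_smul]
      apply form_ext hp
      · exact conv_K Δ hΔ _ _ (chi_K _) (hG (p - 1) (by omega) (by omega))
      · intro x; simp
      · intro c n
        rw [key, e1, e2]
        simp
  · intro s hs1 hs2
    rw [zero_smul, add_zero]
    have hG := fun s h1 h2 => G_Kinv hp ρP hP s h1 h2
    apply form_ext hp
    · exact conv_K Δ hΔ _ _ (chi_K _) (hG s (by omega) (by omega))
    · intro x
      simp only [LinearMap.smul_apply, hG (p - s) (by omega) (by omega) x]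
    · intro c n
      rw [conv_chi1 hp _ (hX (-1) (Or.inr rfl) 1 (by omega) (by omega)) Δ hΔ,
        G_eval hp ρP hP s (by omega) (by omega), LinearMap.smul_apply,
        G_eval hp ρP hP (p - s) (by omega) (by omega), SS_dual hp s (by omega) c,
        ← cas_neg hp s (by omega), smul_eq_mul]
      cases n with
      | zero => simp
      | succ n =>
        have h : ((-1 : ℂ) ^ n) * (-1) ^ n = 1 := by rw [← mul_pow]; norm_num
        rw [Nat.add_sub_cancel, mul_pow (-1 : ℂ) _ n, pow_succ (-1 : ℂ) n]
        linear_combination (-(-1) ^ c * SS p s c * ((n + 1 : ℕ) : ℂ) *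
          cas p ((p - s : ℕ) : ℤ) ^ n) * h

end Uqsl2
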